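/- arXiv:1811.04649 — 2 statements merged into one kernel-verified Lean document; each statement's English description precedes it below -/
import Mathlib

section
/- Let A be a unital associative algebra over ℂ, p ≥ 1, and g a ℂ-algebra automorphism of A with g^p = id. Let W be a simple left A-module of at most countable complex dimension such that W is isomorphic to the twisted module W∘g as an A-module. Then W, regarded as a module over the fixed subalgebra A^g = {a ∈ A : g(a) = a}, is completely reducible: W decomposes as a direct sum of at most p simple A^g-submodules, and these simple summands are pairwise non-isomorphic as A^g-modules. -/
/-- The fixed-point subalgebra `A^g = {a ∈ A : g(a) = a}` of a `ℂ`-algebra automorphism. -/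
def fixedSubalgebra {A : Type*} [Ring A] [Algebra ℂ A] (g : A ≃ₐ[ℂ] A) : Subalgebra ℂ A :=
  AlgHom.equalizer g.toAlgHom (AlgHom.id ℂ A)

open Polynomial in
lemma aux_spectrum_nonempty (V : Type*) [AddCommGroup V] [Module ℂ V] [Nontrivial V]
    (hV : Module.rank ℂ V ≤ Cardinal.aleph0) (x : Module.End ℂ V) :
    (spectrum ℂ x).Nonempty := by
  classical
  by_contra hne
  rw [Set.not_nonempty_iff_eq_empty] at hne
  have hu : ∀ c : ℂ, IsUnit (aeval x (X - C c)) := by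
    intro c
    have hc : c ∉ spectrum ℂ x := by simp [hne]
    rw [spectrum.notMem_iff] at hc
    have := hc.neg
    simpa using this
  have hq : ∀ q : ℂ[X], q ≠ 0 → ∀ v, aeval x q v = 0 → v = 0 := by
    intro q hq v hv
    have hs := (IsAlgClosed.splits q).eq_prod_roots
    have hun : IsUnit (aeval x (Multiset.map (fun a => X - C a) q.roots).prod) := by
      by_contra h
      obtain ⟨k, hk, -⟩ := spectrum.exists_mem_of_not_isUnit_aeval_prod h
      simp [hne] at hk
    rw [hs, map_mul, aeval_C, Module.End.mul_apply, Module.algebraMap_end_apply] at hv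
    have h2 := (smul_eq_zero.1 hv).resolve_left (leadingCoeff_ne_zero.2 hq)
    have hinj := ((Module.End.isUnit_iff _).1 hun).1
    exact hinj (by rw [h2, map_zero])
  obtain ⟨w, hw⟩ := exists_ne (0 : V)
  have hv : ∀ c : ℂ, ∃ v, aeval x (X - C c) v = w := fun c =>
    ((Module.End.isUnit_iff _).1 (hu c)).2 w
  choose v hv using hv
  have hli : LinearIndependent ℂ v := by
    refine linearIndependent_iff'.2 fun s m hm i hi ↦ ?_
    have h1 : aeval x (∑ c ∈ s, C (m c) * ∏ j ∈ s.erase c, (X - C j)) w = 0 := by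
      have h3 := congrArg (aeval x (∏ j ∈ s, (X - C j))) hm
      rw [map_zero, map_sum] at h3
      rw [map_sum, LinearMap.sum_apply, ← h3]
      refine Finset.sum_congr rfl fun c hc => ?_
      rw [← Finset.prod_erase_mul s _ hc, map_mul, Module.End.mul_apply, map_smul, map_mul,
        Module.End.mul_apply, hv, aeval_C, Module.algebraMap_end_apply]
    have h2 : (∑ c ∈ s, C (m c) * ∏ j ∈ s.erase c, (X - C j)) = 0 := by
      by_contra h
      exact hw (hq _ h w h1)
    have h3 := congrArg (eval i) h2
    rw [eval_finsetSum, Finset.sum_eq_single i] at h3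
    · simp only [eval_mul, eval_C, eval_zero, eval_prod, eval_sub, eval_X, mul_eq_zero,
        Finset.prod_eq_zero_iff] at h3
      rcases h3 with h3 | ⟨j, hj, h3⟩
      · exact h3
      · exact absurd (sub_eq_zero.1 h3).symm (Finset.ne_of_mem_erase hj)
    · intro b hb hbi
      rw [eval_mul, eval_prod, Finset.prod_eq_zero (i := i), mul_zero]
      · exact Finset.mem_erase.2 ⟨hbi.symm, hi⟩
      · simp
    · intro h; exact absurd hi h
  have h5 := hli.cardinal_lift_le_rank
  have h6 : Cardinal.lift.{0} (Module.rank ℂ V) ≤ Cardinal.aleph0 := by simpa using hV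
  have h7 := h5.trans h6
  rw [Cardinal.mk_complex] at h7
  simp at h7
  exact absurd h7 (not_le.2 Cardinal.aleph0_lt_continuum)

open Polynomial in
lemma aux_iSup (V : Type*) [AddCommGroup V] [Module ℂ V] (x : Module.End ℂ V) (s : Finset ℂ) :
    LinearMap.ker (aeval x (∏ c ∈ s, (X - C c))) ≤ ⨆ c ∈ s, x.eigenspace c := by
  classical
  induction s using Finset.induction_on with
  | empty => 
    intro v hv
    simpa using hv
  | insert a s ha ih =>
    rw [Finset.prod_insert ha, ← sup_ker_aeval_eq_ker_aeval_mul_of_coprime, Finset.iSup_insert]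
    · refine sup_le_sup ?_ ih
      intro v hv
      rw [Module.End.mem_eigenspace_iff]
      simpa [sub_eq_zero] using hv
    · refine IsCoprime.prod_right fun i hi => ?_
      exact isCoprime_X_sub_C_of_isUnit_sub (sub_ne_zero.2 (by rintro rfl; exact ha hi)).isUnit

lemma aux_schur (A : Type*) [Ring A] [Algebra ℂ A]
    (W : Type*) [AddCommGroup W] [Module ℂ W] [Module A W] [IsScalarTower ℂ A W]
    (hW : IsSimpleModule A W)
    (hcount : Module.rank ℂ W ≤ Cardinal.aleph0) (T : Module.End A W) :
    ∃ c : ℂ, ∀ w, T w = c • w := by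
  have := hW.nontrivial
  obtain ⟨c, hc⟩ := aux_spectrum_nonempty W hcount (T.restrictScalars ℂ)
  refine ⟨c, ?_⟩
  by_contra hT
  have hne : T - c • (1 : Module.End A W) ≠ 0 := by
    intro h
    apply hT
    intro w
    have := LinearMap.congr_fun h w
    simpa [sub_eq_zero] using this
  have hb := LinearMap.bijective_of_ne_zero hne
  apply hc
  show IsUnit _
  rw [Module.End.isUnit_iff]
  have : (⇑((algebraMap ℂ (Module.End ℂ W)) c - T.restrictScalars ℂ)) 
      = (fun w => - w) ∘ ⇑(T - c • (1 : Module.End A W)) := by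
    funext w
    simp
  rw [this]
  exact (Equiv.neg W).bijective.comp hb

/-- If `g^p = id`, `W` is a simple `A`-module of at most countable complex
dimension and `W ≅ W ∘ g`, then as an `A^g`-module `W` is completely reducible: it is an
internal direct sum of at most `p` simple `A^g`-submodules that are pairwise non-isomorphic. -/
theorem complete_reducibility_over_fixed_subalgebra
    (A : Type*) [Ring A] [Algebra ℂ A]
    (p : ℕ) (hp : 1 ≤ p)
    (g : A ≃ₐ[ℂ] A) (hg : g ^ p = 1)
    (W : Type*) [AddCommGroup W] [Module ℂ W] [Module A W] [IsScalarTower ℂ A W]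
    (hW : IsSimpleModule A W)
    (hcount : Module.rank ℂ W ≤ Cardinal.aleph0)
    (hiso : ∃ f : W ≃+ W, ∀ (a : A) (w : W), f (a • w) = g a • f w) :
    ∃ k : ℕ, k ≤ p ∧ ∃ N : Fin k → Submodule (fixedSubalgebra g) W,
      DirectSum.IsInternal N ∧
      (∀ i, IsSimpleModule (fixedSubalgebra g) (N i)) ∧
      (∀ i j, i ≠ j → IsEmpty ((N i) ≃ₗ[fixedSubalgebra g] (N j))) := by
  classical
  have := hW.nontrivial
  obtain ⟨f, hf⟩ := hiso
  have hfc : ∀ (c : ℂ) (w : W), f (c • w) = c • f w := by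
    intro c w
    rw [← algebraMap_smul A c w, hf, AlgEquiv.commutes, algebraMap_smul]
  let F : Module.End ℂ W := { toFun := f, map_add' := map_add f, map_smul' := hfc }
  have hF : ∀ (a : A) (w : W), F (a • w) = g a • F w := hf
  have hFi : ∀ (n : ℕ) (a : A) (w : W), (F ^ n) (a • w) = (g ^ n) a • (F ^ n) w := by
    intro n
    induction n with
    | zero => intro a w; simp
    | succ n ih =>
      intro a w
      rw [pow_succ', pow_succ', Module.End.mul_apply, ih, hF]
      rfl
  obtain ⟨c, hc⟩ := aux_schur A W hW hcount
    { toFun := ⇑(F ^ p), map_add' := map_add _, map_smul' := by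
        intro a w; rw [hFi, hg]; rfl }
  replace hc : ∀ w, (F ^ p) w = c • w := hc
  have hinj : Function.Injective (F ^ p) := by
    rw [Module.End.coe_pow]; exact Function.Injective.iterate f.injective p
  have hc0 : c ≠ 0 := by
    rintro rfl
    obtain ⟨w, hw⟩ := exists_ne (0 : W)
    exact hw (hinj (by simp [hc]))
  obtain ⟨b, hb⟩ := IsAlgClosed.exists_pow_nat_eq c (n := p) (by omega)
  have hb0 : b ≠ 0 := by
    rintro rfl
    rw [zero_pow (by omega)] at hb
    exact hc0 hb.symm
  obtain ⟨σ, hσdef⟩ : ∃ σ : Module.End ℂ W, σ = b⁻¹ • F := ⟨_, rfl⟩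
  have hσ : ∀ (a : A) (w : W), σ (a • w) = g a • σ w := by
    intro a w
    simp only [hσdef, LinearMap.smul_apply, hF]
    rw [smul_comm]
  have hσp : σ ^ p = 1 := by
    ext w
    rw [hσdef, smul_pow, LinearMap.smul_apply, hc, smul_smul, inv_pow, hb, inv_mul_cancel₀ hc0]
    simp
  clear hσdef
  -- the averaged element
  have key : ∀ a : A, ∃ a0 : fixedSubalgebra g, ∀ μ : ℂ, μ ^ p = 1 → ∀ w v : W,
      σ w = μ • w → σ v = μ • v → a • w = v → (a0 : A) • w = v := by
    intro a
    refine ⟨⟨(p : ℂ)⁻¹ • ∑ i ∈ Finset.range p, (g ^ i) a, ?_⟩, ?_⟩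
    · show g _ = _
      rw [map_smul, map_sum]
      congr 1
      have h1 := Finset.sum_range_succ (fun i => (g ^ i) a) p
      have h2 := Finset.sum_range_succ' (fun i => (g ^ i) a) p
      rw [h1, hg, pow_zero] at h2
      have h3 := add_right_cancel h2
      show _ = ∑ i ∈ Finset.range p, (g ^ i) a
      rw [h3]
      refine Finset.sum_congr rfl fun i _ => ?_
      rw [pow_succ']; rfl
    · intro μ hμ w v hw hv hav
      have hμ0 : μ ≠ 0 := by
        rintro rfl
        rw [zero_pow (by omega)] at hμ
        exact zero_ne_one hμ
      have hi : ∀ i : ℕ, (g ^ i) a • w = v := by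
        intro i
        induction i with
        | zero => simpa using hav
        | succ i ih =>
          have h4 := hσ ((g ^ i) a) w
          rw [ih, hv, hw, smul_comm] at h4
          have h5 := smul_right_injective W hμ0 h4
          rw [pow_succ']
          exact h5.symm
      show ((p : ℂ)⁻¹ • ∑ i ∈ Finset.range p, (g ^ i) a) • w = v
      rw [smul_assoc, Finset.sum_smul, Finset.sum_congr rfl fun i _ => hi i, Finset.sum_const,
        Finset.card_range, ← Nat.cast_smul_eq_nsmul ℂ, smul_smul, inv_mul_cancel₀, one_smul]
      exact_mod_cast (by omega : p ≠ 0)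
  let S : Finset ℂ := (Polynomial.nthRootsFinset p (1 : ℂ)).filter (fun μ => σ.eigenspace μ ≠ ⊥)
  have hS : ∀ μ : S, (μ : ℂ) ^ p = 1 := fun μ =>
    (Polynomial.mem_nthRootsFinset (by omega) _).1 (Finset.mem_filter.1 μ.2).1
  have e : Fin S.card ≃ S := S.equivFin.symm
  let N : ℂ → Submodule (fixedSubalgebra g) W := fun μ =>
    { carrier := {w | σ w = μ • w}
      add_mem' := by
        intro x y hx hy
        simp only [Set.mem_ofPred_eq] at *
        rw [map_add, hx, hy, smul_add]
      zero_mem' := by simp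
      smul_mem' := by
        intro a x hx
        have ha : g (a : A) = a := a.2
        simp only [Set.mem_ofPred_eq] at *
        show σ ((a : A) • x) = μ • ((a : A) • x)
        rw [hσ, ha, hx, smul_comm] }
  have hN : ∀ μ w, w ∈ N μ ↔ σ w = μ • w := fun μ w => Iff.rfl
  refine ⟨S.card, ?_, fun i => N (e i), ?_, ?_, ?_⟩
  · refine (Finset.card_filter_le _ _).trans ?_
    rw [Polynomial.nthRootsFinset_def]
    exact (Multiset.toFinset_card_le _).trans (Polynomial.card_nthRoots p 1)
  · have hint : DirectSum.IsInternal (fun i => σ.eigenspace (e i : ℂ)) := by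
      apply DirectSum.isInternal_submodule_of_iSupIndep_of_iSup_eq_top
      · exact (σ.eigenspaces_iSupIndep).comp (f := fun i => (e i : ℂ))
          (Subtype.val_injective.comp e.injective)
      · rw [eq_top_iff]
        have h1 := aux_iSup W σ (Polynomial.nthRootsFinset p (1 : ℂ))
        rw [← Polynomial.X_pow_sub_one_eq_prod (by omega)
          (Complex.isPrimitiveRoot_exp p (by omega))] at h1
        simp only [map_sub, map_pow, Polynomial.aeval_X, map_one, hσp, sub_self,
          LinearMap.ker_zero] at h1
        refine h1.trans ?_
        refine iSup₂_le fun μ hμ => ?_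
        by_cases h : σ.eigenspace μ = ⊥
        · rw [h]; exact bot_le
        · have := le_iSup (fun i => σ.eigenspace (e i : ℂ))
            (e.symm ⟨μ, Finset.mem_filter.2 ⟨hμ, h⟩⟩)
          simpa using this
    have hinj : ∀ i, ∀ w, w ∈ N (e i) ↔ w ∈ σ.eigenspace (e i : ℂ) := fun i w => by
      rw [hN, Module.End.mem_eigenspace_iff]
    have hEq : (fun i => σ.eigenspace (e i : ℂ)) = fun i => (N (e i)).restrictScalars ℂ := by
      funext i
      ext w
      rw [Submodule.restrictScalars_mem, hinj]
    rw [hEq] at hint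
    exact hint
  · intro i
    rw [isSimpleModule_iff_toSpanSingleton_surjective]
    constructor
    · have h := (Finset.mem_filter.1 (e i).2).2
      obtain ⟨w, hw, hw0⟩ := (Submodule.ne_bot_iff _).1 h
      rw [Module.End.mem_eigenspace_iff] at hw
      exact ⟨⟨⟨w, hw⟩, 0, fun h => hw0 (congrArg Subtype.val h)⟩⟩
    · rintro ⟨w, hw⟩ hw0 ⟨v, hv⟩
      have hw0' : w ≠ 0 := fun h => hw0 (Subtype.ext h)
      obtain ⟨a, ha⟩ := IsSimpleModule.toSpanSingleton_surjective A hw0' v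
      obtain ⟨a0, ha0⟩ := key a
      exact ⟨a0, Subtype.ext (ha0 _ (hS (e i)) w v hw hv ha)⟩
  · intro i j hij
    refine ⟨fun φ => ?_⟩
    have hμ : (e i : ℂ) - e j ≠ 0 := sub_ne_zero.2 fun h => hij (e.injective (Subtype.ext h))
    have h := (Finset.mem_filter.1 (e i).2).2
    obtain ⟨w, hw, hw0⟩ := (Submodule.ne_bot_iff _).1 h
    rw [Module.End.mem_eigenspace_iff] at hw
    have hφ : σ (φ ⟨w, hw⟩ : W) = (e j : ℂ) • (φ ⟨w, hw⟩ : W) := (φ ⟨w, hw⟩).2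
    let G : Module.End (Module.End A W) W :=
      { toFun := fun x => ((e i : ℂ) - e j)⁻¹ • (σ x - (e j : ℂ) • x)
        map_add' := by intro x y; simp only [map_add, smul_add, smul_sub]; abel
        map_smul' := by
          intro T x
          obtain ⟨t, ht⟩ := aux_schur A W hW hcount T
          simp only [Module.End.smul_def, ht, map_smul, RingHom.id_apply]
          rw [smul_comm _ t x, ← smul_sub, smul_comm] }
    obtain ⟨a, ha⟩ := jacobson_density (R := A) G {w, (φ ⟨w, hw⟩ : W)}
    have h1 : a • w = w := by
      rw [← ha w (by simp)]
      show ((e i : ℂ) - e j)⁻¹ • (σ w - (e j : ℂ) • w) = w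
      rw [hw, ← sub_smul, smul_smul, inv_mul_cancel₀ hμ, one_smul]
    have h2 : a • (φ ⟨w, hw⟩ : W) = 0 := by
      rw [← ha _ (by simp)]
      show ((e i : ℂ) - e j)⁻¹ • (σ _ - (e j : ℂ) • _) = 0
      rw [hφ, sub_self, smul_zero]
    obtain ⟨a0, ha0⟩ := key a
    have h3 := ha0 _ (hS (e i)) w w hw hw h1
    have h4 := ha0 _ (hS (e j)) _ 0 hφ (by simp) h2
    have h5 : a0 • (⟨w, hw⟩ : N (e i)) = ⟨w, hw⟩ := Subtype.ext h3
    have h6 : φ ⟨w, hw⟩ = 0 := by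
      rw [← h5, map_smul]
      exact Subtype.ext h4
    have h7 := (LinearEquiv.map_eq_zero_iff φ).1 h6
    exact hw0 (congrArg Subtype.val h7)
end

section
/- Let L be a Lie algebra over ℂ, p ≥ 1, and σ a Lie algebra automorphism of L with σ^p = id. Let 𝔫 ⊆ L be a Lie subalgebra with σ(𝔫) = 𝔫 and such that for every x ∈ 𝔫 the map ad x is locally nilpotent on L. Let λ : 𝔫 → ℂ be a Whittaker function such that the functions λ∘σⁱ restricted to 𝔫, for i = 0, 1, …, p−1, are pairwise distinct. Let W be a simple U(L)-module that is a Whittaker module of type λ, and let σ̂ be the induced ℂ-algebra automorphism of U(L) (the unique algebra automorphism with σ̂∘ι = ι∘σ). Then W, regarded by restriction as a module over the fixed subalgebra U(L)^{σ̂} = {u ∈ U(L) : σ̂(u) = u}, is a simple U(L)^{σ̂}-module. -/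
section WhittakerHelpers

attribute [local instance 100] LieRing.ofAssociativeRing

theorem whit_uea_induction {L : Type*} [LieRing L] [LieAlgebra ℂ L]
    (S : Subalgebra ℂ (UniversalEnvelopingAlgebra ℂ L))
    (hS : ∀ y : L, UniversalEnvelopingAlgebra.ι ℂ y ∈ S) (a : UniversalEnvelopingAlgebra ℂ L) :
    a ∈ S := by
  let f : L →ₗ⁅ℂ⁆ S :=
    { toFun := fun y => ⟨UniversalEnvelopingAlgebra.ι ℂ y, hS y⟩
      map_add' := fun x y => by ext; simp
      map_smul' := fun c x => by ext; simp
      map_lie' := fun {x y} => by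
        ext
        simp [LieRing.of_associative_ring_bracket] }
  have h : S.val.comp (UniversalEnvelopingAlgebra.lift ℂ f) = AlgHom.id ℂ _ := by
    apply UniversalEnvelopingAlgebra.hom_ext
    ext y
    simp [f]
  have h2 := DFunLike.congr_fun h a
  have h3 : ((UniversalEnvelopingAlgebra.lift ℂ f a : S) : UniversalEnvelopingAlgebra ℂ L) = a := h2
  rw [← h3]
  exact (UniversalEnvelopingAlgebra.lift ℂ f a).2

theorem whit_step {L : Type*} [LieRing L] [LieAlgebra ℂ L]
    {W : Type*} [AddCommGroup W] [Module (UniversalEnvelopingAlgebra ℂ L) W]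
    (x : L) (c : ℂ) (D : UniversalEnvelopingAlgebra ℂ L)
    (hD : D = UniversalEnvelopingAlgebra.ι ℂ x - algebraMap ℂ _ c) (m : ℕ) :
    ∀ y : L, (fun z : L => ⁅x, z⁆)^[m] y = 0 → ∀ (k : ℕ) (v : W), D ^ k • v = 0 →
      ∃ l : ℕ, D ^ l • (UniversalEnvelopingAlgebra.ι ℂ y • v) = 0 := by
  induction m with
  | zero =>
    intro y hy k v _
    have : y = 0 := hy
    exact ⟨0, by simp [this]⟩
  | succ m ih =>
    intro y hy k
    rw [Function.iterate_succ_apply] at hy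
    induction k with
    | zero =>
      intro v hv
      have : v = 0 := by simpa using hv
      exact ⟨0, by simp [this]⟩
    | succ k ihk =>
      intro v hv
      obtain ⟨l₁, h₁⟩ := ihk (D • v) (by rw [smul_smul, ← pow_succ]; exact hv)
      obtain ⟨l₂, h₂⟩ := ih _ hy (k + 1) v hv
      have hc : D * UniversalEnvelopingAlgebra.ι ℂ y =
          UniversalEnvelopingAlgebra.ι ℂ y * D + UniversalEnvelopingAlgebra.ι ℂ ⁅x, y⁆ := by
        rw [LieHom.map_lie, LieRing.of_associative_ring_bracket, hD, sub_mul, mul_sub,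
          Algebra.commutes]
        abel
      refine ⟨l₁ + l₂ + 1, ?_⟩
      rw [pow_succ, mul_smul, smul_smul D, hc, add_smul, smul_add, mul_smul (_ : UniversalEnvelopingAlgebra ℂ L) D v]
      rw [pow_add, mul_smul _ _ (_ • _ • v), mul_smul _ _ (_ • v), h₂, smul_zero, add_zero, ← mul_smul (D ^ l₁),
        ← pow_add, add_comm, pow_add, mul_smul, h₁, smul_zero]

theorem whit_locnil {L : Type*} [LieRing L] [LieAlgebra ℂ L]
    {W : Type*} [AddCommGroup W] [Module (UniversalEnvelopingAlgebra ℂ L) W]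
    (x : L) (c : ℂ) (hx : ∀ y : L, ∃ k : ℕ, (fun z : L => ⁅x, z⁆)^[k] y = 0)
    (w : W) (hgen : Submodule.span (UniversalEnvelopingAlgebra ℂ L) {w} = ⊤)
    (hw : UniversalEnvelopingAlgebra.ι ℂ x • w =
      algebraMap ℂ (UniversalEnvelopingAlgebra ℂ L) c • w) (v : W) :
    ∃ k : ℕ, (UniversalEnvelopingAlgebra.ι ℂ x -
      algebraMap ℂ (UniversalEnvelopingAlgebra ℂ L) c) ^ k • v = 0 := by
  set D := UniversalEnvelopingAlgebra.ι ℂ x -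
      algebraMap ℂ (UniversalEnvelopingAlgebra ℂ L) c with hD
  let S : Subalgebra ℂ (UniversalEnvelopingAlgebra ℂ L) :=
    { carrier := {a | ∀ v : W, (∃ k : ℕ, D ^ k • v = 0) → ∃ k : ℕ, D ^ k • (a • v) = 0}
      mul_mem' := by
        intro a b ha hb v hv
        rw [mul_smul]
        exact ha _ (hb v hv)
      add_mem' := by
        intro a b ha hb v hv
        obtain ⟨k, hk⟩ := ha v hv
        obtain ⟨l, hl⟩ := hb v hv
        refine ⟨k + l, ?_⟩
        rw [add_smul, smul_add]
        nth_rewrite 1 [add_comm k l]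
        rw [pow_add, pow_add, mul_smul _ _ (a • v), mul_smul _ _ (b • v), hk, hl]
        simp
      algebraMap_mem' := by
        rintro r v ⟨k, hk⟩
        refine ⟨k, ?_⟩
        rw [smul_smul, ← Algebra.commutes, mul_smul, hk, smul_zero] }
  have hv : v ∈ Submodule.span (UniversalEnvelopingAlgebra ℂ L) {w} := by rw [hgen]; trivial
  obtain ⟨a, rfl⟩ := Submodule.mem_span_singleton.1 hv
  have ha : a ∈ S := by
    apply whit_uea_induction
    rintro y v ⟨k, hk⟩
    obtain ⟨m, hm⟩ := hx y
    exact whit_step x c D hD m y hm k v hk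
  exact ha w ⟨1, by rw [pow_one, hD, sub_smul, hw, sub_self]⟩

theorem whit_inj {A : Type*} [Ring A] [Algebra ℂ A] {W : Type*} [AddCommGroup W] [Module A W]
    (X : A) (c d : ℂ) (hcd : c ≠ d) (k : ℕ) : ∀ v : W,
    (X - algebraMap ℂ A c) ^ k • v = 0 → (X - algebraMap ℂ A d) • v = 0 → v = 0 := by
  induction k with
  | zero => intro v hv _; simpa using hv
  | succ k ih =>
    intro v hv hd
    apply ih v _ hd
    have h1 : X • v = algebraMap ℂ A d • v := by
      rw [sub_smul, sub_eq_zero] at hd; exact hd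
    have h2 : (X - algebraMap ℂ A c) • v = algebraMap ℂ A (d - c) • v := by
      rw [sub_smul, h1, map_sub, sub_smul]
    rw [pow_succ, mul_smul, h2, smul_smul, ← Algebra.commutes, mul_smul] at hv
    have h3 := congrArg (fun z => algebraMap ℂ A (d - c)⁻¹ • z) hv
    simp only [smul_zero] at h3
    rwa [smul_smul, ← map_mul, inv_mul_cancel₀ (sub_ne_zero.2 hcd.symm), map_one, one_smul] at h3

theorem whit_inj_pow {A : Type*} [Ring A] [Algebra ℂ A] {W : Type*} [AddCommGroup W] [Module A W]
    (X : A) (c d : ℂ) (hcd : c ≠ d) (h : ∀ v : W, ∃ k : ℕ, (X - algebraMap ℂ A c) ^ k • v = 0)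
    (m : ℕ) (v : W) (hv : v ≠ 0) : (X - algebraMap ℂ A d) ^ m • v ≠ 0 := by
  induction m with
  | zero => simpa using hv
  | succ m ih =>
    rw [pow_succ', mul_smul]
    intro h0
    obtain ⟨k, hk⟩ := h ((X - algebraMap ℂ A d) ^ m • v)
    exact ih (whit_inj X c d hcd k _ hk h0)

theorem whit_tau_iter {L : Type*} [LieRing L] [LieAlgebra ℂ L] (σ : L ≃ₗ⁅ℂ⁆ L)
    (τ : UniversalEnvelopingAlgebra ℂ L →ₐ[ℂ] UniversalEnvelopingAlgebra ℂ L)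
    (hτ : ∀ y : L, τ (UniversalEnvelopingAlgebra.ι ℂ y) = UniversalEnvelopingAlgebra.ι ℂ (σ y))
    (n : ℕ) (y : L) : (τ ^ n) (UniversalEnvelopingAlgebra.ι ℂ y) =
      UniversalEnvelopingAlgebra.ι ℂ ((⇑σ)^[n] y) := by
  induction n with
  | zero => simp
  | succ n ih => rw [pow_succ', AlgHom.mul_apply, ih, hτ, Function.iterate_succ_apply']

theorem whit_tau_pow {L : Type*} [LieRing L] [LieAlgebra ℂ L]
    (f : UniversalEnvelopingAlgebra ℂ L →ₐ[ℂ] UniversalEnvelopingAlgebra ℂ L)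
    (hf : ∀ y : L, f (UniversalEnvelopingAlgebra.ι ℂ y) = UniversalEnvelopingAlgebra.ι ℂ y)
    (a : UniversalEnvelopingAlgebra ℂ L) : f a = a :=
  whit_uea_induction (AlgHom.equalizer f (AlgHom.id ℂ _)) hf a

end WhittakerHelpers


/-- Let `σ` be a Lie algebra automorphism of `L` with `σ^p = id` preserving
a Lie subalgebra `𝔫` that acts ad-locally-nilpotently on `L`. Let `λ : 𝔫 → ℂ` be a Whittaker
function whose twists `λ∘σⁱ` (`i = 0, …, p−1`) are pairwise distinct on `𝔫`, and let `W` be a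
simple Whittaker `U(L)`-module of type `λ`. Then `W` is simple over the fixed subalgebra
`U(L)^{σ̂}` of the induced algebra automorphism `σ̂` of `U(L)` (characterized by
`σ̂ ∘ ι = ι ∘ σ`). -/
theorem whittaker_module_simple_over_orbifold
    (L : Type*) [LieRing L] [LieAlgebra ℂ L]
    (p : ℕ) (hp : 1 ≤ p)
    (σ : L ≃ₗ⁅ℂ⁆ L) (hσp : ∀ y : L, (⇑σ)^[p] y = y)
    (N : LieSubalgebra ℂ L) (hNstab : ∀ x : L, x ∈ N → σ x ∈ N)
    (hnil : ∀ x : N, ∀ y : L, ∃ k : ℕ, (fun z : L => ⁅(x : L), z⁆)^[k] y = 0)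
    (lam : N →ₗ[ℂ] ℂ) (hlam : ∀ x y : N, lam ⁅x, y⁆ = 0)
    (hdist : ∀ i j : ℕ, i < p → j < p → i ≠ j →
      ∃ (x : L) (_ : x ∈ N) (hxi : (⇑σ)^[i] x ∈ N) (hxj : (⇑σ)^[j] x ∈ N),
        lam ⟨(⇑σ)^[i] x, hxi⟩ ≠ lam ⟨(⇑σ)^[j] x, hxj⟩)
    (W : Type*) [AddCommGroup W] [Module (UniversalEnvelopingAlgebra ℂ L) W]
    (hW : IsSimpleModule (UniversalEnvelopingAlgebra ℂ L) W)
    (w : W) (hgen : Submodule.span (UniversalEnvelopingAlgebra ℂ L) {w} = ⊤)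
    (hw : ∀ x : N, UniversalEnvelopingAlgebra.ι ℂ (x : L) • w =
      algebraMap ℂ (UniversalEnvelopingAlgebra ℂ L) (lam x) • w)
    (τ : UniversalEnvelopingAlgebra ℂ L →ₐ[ℂ] UniversalEnvelopingAlgebra ℂ L)
    (hτ : ∀ y : L, τ (UniversalEnvelopingAlgebra.ι ℂ y) = UniversalEnvelopingAlgebra.ι ℂ (σ y)) :
    IsSimpleModule (AlgHom.equalizer τ (AlgHom.id ℂ (UniversalEnvelopingAlgebra ℂ L))) W := by
  have hloc : ∀ (x : N) (v : W), ∃ k : ℕ, (UniversalEnvelopingAlgebra.ι ℂ (x : L) -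
      algebraMap ℂ (UniversalEnvelopingAlgebra ℂ L) (lam x)) ^ k • v = 0 := fun x v =>
    whit_locnil (x : L) (lam x) (hnil x) w hgen (hw x) v
  have hiter := whit_tau_iter σ τ hτ
  have hτp : ∀ a, (τ ^ p) a = a := whit_tau_pow _ fun y => by rw [hiter, hσp]
  have key : ∀ v : W, v ≠ 0 → ∀ n : ℕ, n < p → ∃ u : UniversalEnvelopingAlgebra ℂ L,
      u • v ≠ 0 ∧ ∀ j, 1 ≤ j → j ≤ n → (τ ^ j) u • v = 0 := by
    intro v hv n
    induction n with
    | zero => intro _; exact ⟨1, by simpa using hv, fun j h1 h2 => by omega⟩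
    | succ n ih =>
      intro hn
      obtain ⟨u, hu, huj⟩ := ih (by omega)
      obtain ⟨x, hx, hx0, hxj, hne⟩ := hdist 0 (n + 1) (by omega) hn (by omega)
      obtain ⟨k, hk⟩ := hloc ⟨_, hxj⟩ ((τ ^ (n + 1)) u • v)
      refine ⟨(UniversalEnvelopingAlgebra.ι ℂ x -
        algebraMap ℂ _ (lam ⟨(⇑σ)^[n + 1] x, hxj⟩)) ^ k * u, ?_, ?_⟩
      · rw [mul_smul]
        exact whit_inj_pow _ _ _ hne (hloc ⟨_, hx0⟩) k _ hu
      · intro j h1 h2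
        rw [map_mul, mul_smul]
        rcases Nat.lt_or_ge n j with h | h
        · obtain rfl : j = n + 1 := by omega
          rw [map_pow, map_sub, hiter, AlgHom.commutes]
          exact hk
        · rw [huj j h1 h, smul_zero]
  rw [isSimpleModule_iff_toSpanSingleton_surjective]
  refine ⟨hW.nontrivial, ?_⟩
  intro v hv v'
  obtain ⟨u, hu, huj⟩ := key v hv (p - 1) (by omega)
  obtain ⟨a, ha⟩ := (isSimpleModule_iff_toSpanSingleton_surjective.1 hW).2 _ hu v'
  have ha' : a • u • v = v' := ha
  refine ⟨⟨∑ i ∈ Finset.range p, (τ ^ i) (a * u), ?_⟩, ?_⟩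
  · rw [AlgHom.mem_equalizer, map_sum]
    change _ = ∑ i ∈ Finset.range p, (τ ^ i) (a * u)
    have h1 := Finset.sum_range_succ (fun i => (τ ^ i) (a * u)) p
    have h2 := Finset.sum_range_succ' (fun i => (τ ^ i) (a * u)) p
    rw [h1, hτp, pow_zero, AlgHom.one_apply] at h2
    rw [add_right_cancel h2]
    refine Finset.sum_congr rfl fun i _ => ?_
    rw [pow_succ', AlgHom.mul_apply]
  · change (∑ i ∈ Finset.range p, (τ ^ i) (a * u)) • v = v'
    rw [Finset.sum_smul, Finset.sum_eq_single 0]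
    · rw [pow_zero, AlgHom.one_apply, mul_smul, ha']
    · intro j hj hj0
      rw [Finset.mem_range] at hj
      rw [map_mul, mul_smul, huj j (by omega) (by omega), smul_zero]
    · intro h; exact absurd (Finset.mem_range.2 hp) h
end
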